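/- Fix integers k ≥ 1 and m ≥ 1, let T be the ℚ-linear endomorphism of the free ℚ-module (Fin m → Fin k) →₀ ℚ induced by the cyclic shift σ, and set τ_m := T if m is odd and τ_m := −T if m is even. Then, as rational numbers, dim_ℚ ker(id − τ_m) = (1/m) · ∑_{e ∣ m} φ(m/e) · k^e if m is odd, and dim_ℚ ker(id − τ_m) = ∑_{d ∣ m, d even} (1/d) · ∑_{e ∣ d} μ(d/e) · k^e if m is even. (This is the combinatorial content of Propositions 1.10 and 5.14 of the paper: for W = ⋁_k S^{n+1} with n+1 even, the coefficient a_m of z^{mn} in the rational Poincaré series of H_*(𝓛W; ℚ) is given by these two formulas.) -/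

import Mathlib

/-- The cyclic shift on words of length `m` in `k` letters: `(σ w) i = w (i + 1)`
(for `m ≥ 1`, `finRotate m i = i + 1`). -/
def cyclicShift {k m : ℕ} (w : Fin m → Fin k) : Fin m → Fin k :=
  fun i => w (finRotate m i)

/-- The linear endomorphism of the free `ℚ`-module on the words induced by the cyclic
shift: it sends the basis vector of `w` to the basis vector of `σ w`. -/
noncomputable def shiftMap (k m : ℕ) : Module.End ℚ ((Fin m → Fin k) →₀ ℚ) :=
  Finsupp.lmapDomain ℚ ℚ cyclicShift

/-- The signed cyclic operator `τ_m` of display 5.7 of the paper (for generators of odd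
homological degree): `τ_m = T` if `m` is odd and `τ_m = −T` if `m` is even. -/
noncomputable def tauSigned (k m : ℕ) : Module.End ℚ ((Fin m → Fin k) →₀ ℚ) :=
  if Odd m then shiftMap k m else -(shiftMap k m)

theorem trace_lmapDomain {α : Type*} [Fintype α] [DecidableEq α] (f : α → α) :
    LinearMap.trace ℚ (α →₀ ℚ) (Finsupp.lmapDomain ℚ ℚ f) =
      (Finset.univ.filter fun a => f a = a).card := by
  rw [LinearMap.trace_eq_matrix_trace ℚ Finsupp.basisSingleOne, Matrix.trace]
  simp [LinearMap.toMatrix_apply, Finsupp.single_apply]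

theorem finrank_ker_id_sub_eq_sum_trace {V : Type*} [AddCommGroup V] [Module ℚ V]
    [FiniteDimensional ℚ V] (t : Module.End ℚ V) {m : ℕ} (hm : m ≠ 0) (ht : t ^ m = 1) :
    (Module.finrank ℚ (LinearMap.ker (LinearMap.id - t)) : ℚ) =
      (1 / (m : ℚ)) * ∑ j ∈ Finset.range m, LinearMap.trace ℚ V (t ^ j) := by
  have hm' : (m : ℚ) ≠ 0 := Nat.cast_ne_zero.mpr hm
  have hproj : LinearMap.IsProj (LinearMap.ker (LinearMap.id - t))
      ((1 / (m : ℚ)) • ∑ j ∈ Finset.range m, t ^ j) := by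
    refine ⟨fun x => ?_, fun x hx => ?_⟩
    · have h : (1 - t) * ∑ j ∈ Finset.range m, t ^ j = 0 := by
        rw [mul_neg_geom_sum, ht, sub_self]
      rw [LinearMap.mem_ker, LinearMap.smul_apply, map_smul]
      exact (congrArg (_ • ·) (LinearMap.congr_fun h x)).trans (smul_zero _)
    · have hx' : t x = x := by
        rw [LinearMap.mem_ker, LinearMap.sub_apply, sub_eq_zero] at hx
        exact hx.symm
      have hpow : ∀ j : ℕ, (t ^ j) x = x := fun j => by
        rw [Module.End.pow_apply]
        exact Function.iterate_fixed hx' j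
      simp only [LinearMap.smul_apply, LinearMap.sum_apply, hpow, Finset.sum_const,
        Finset.card_range]
      rw [← Nat.cast_smul_eq_nsmul ℚ, smul_smul, one_div_mul_cancel hm', one_smul]
  rw [← hproj.trace, map_smul, map_sum, smul_eq_mul]

theorem card_periodic_zmod (k m j : ℕ) [NeZero m] :
    Nat.card {w : ZMod m → Fin k // ∀ i, w (i + j) = w i} = k ^ m.gcd j := by
  let H := AddSubgroup.zmultiples (j : ZMod m)
  let e : {w : ZMod m → Fin k // ∀ i, w (i + j) = w i} ≃ (ZMod m ⧸ H → Fin k) :=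
    { toFun := fun w => Quotient.lift w.1 (by
        intro a b hab
        obtain ⟨n, hn⟩ := QuotientAddGroup.leftRel_apply.mp hab
        have hper : Function.Periodic w.1 (j : ZMod m) := w.2
        have h := hper.zsmul n a
        rw [← h]
        simp only at hn
        rw [hn, add_neg_cancel_left])
      invFun := fun f => ⟨fun i => f i, fun i => by
        refine congrArg f (QuotientAddGroup.eq.mpr ?_).symm
        simp [H]⟩
      left_inv := fun w => rfl
      right_inv := fun f => by
        ext x
        induction x using QuotientAddGroup.induction_on
        rfl }
  have hidx : H.index = m.gcd j := by
    have h := H.card_mul_index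
    rw [Nat.card_zmultiples, Nat.card_zmod, ZMod.addOrderOf_coe j (NeZero.ne m)] at h
    have hg := Nat.div_mul_cancel (Nat.gcd_dvd_left m j)
    have hpos : 0 < m / m.gcd j :=
      Nat.div_pos (Nat.gcd_le_left j (NeZero.pos m)) (Nat.gcd_pos_of_pos_left j (NeZero.pos m))
    exact Nat.eq_of_mul_eq_mul_left hpos (h.trans hg.symm)
  rw [Nat.card_congr e, Nat.card_fun, Nat.card_fin]
  exact congrArg _ hidx

theorem cyclicShift_iterate_apply {k n : ℕ} (j : ℕ) (w : Fin (n + 1) → Fin k)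
    (i : ZMod (n + 1)) :
    (cyclicShift^[j] w) i = w (i + (j : ZMod (n + 1)) : ZMod (n + 1)) := by
  induction j generalizing i with
  | zero => exact congrArg w (by simp : i = i + ((0 : ℕ) : ZMod (n + 1)))
  | succ j ih =>
    rw [Function.iterate_succ_apply']
    refine (congrArg (cyclicShift^[j] w) (finRotate_apply i)).trans ((ih (i + 1)).trans ?_)
    exact congrArg w (by push_cast; ring :
      i + 1 + (j : ZMod (n + 1)) = i + ((j + 1 : ℕ) : ZMod (n + 1)))

theorem card_fixed_cyclicShift_iterate (k m j : ℕ) (hm : m ≠ 0) :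
    (Finset.univ.filter fun w : Fin m → Fin k => cyclicShift^[j] w = w).card =
      k ^ m.gcd j := by
  obtain ⟨n, rfl⟩ := Nat.exists_eq_succ_of_ne_zero hm
  rw [← card_periodic_zmod k (n + 1) j, ← Fintype.card_subtype, ← Nat.card_eq_fintype_card]
  refine Nat.card_congr (Equiv.subtypeEquivRight fun w => ?_)
  rw [funext_iff]
  exact forall_congr' fun i => by
    rw [← cyclicShift_iterate_apply j w i]

theorem shiftMap_pow (k m j : ℕ) :
    shiftMap k m ^ j = Finsupp.lmapDomain ℚ ℚ (cyclicShift (k := k) (m := m))^[j] := by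
  induction j with
  | zero => exact (Finsupp.lmapDomain_id ℚ ℚ).symm
  | succ j ih =>
    rw [pow_succ, ih, Function.iterate_succ, Finsupp.lmapDomain_comp]
    rfl

theorem shiftMap_pow_self (k m : ℕ) (hm : m ≠ 0) : shiftMap k m ^ m = 1 := by
  obtain ⟨n, rfl⟩ := Nat.exists_eq_succ_of_ne_zero hm
  have h : (cyclicShift (k := k) (m := n + 1))^[n + 1] = id := by
    funext w (i : ZMod (n + 1))
    exact (cyclicShift_iterate_apply (n + 1) w i).trans (congrArg w
      (by simp : (i : ZMod (n + 1)) + ((n + 1 : ℕ) : ZMod (n + 1)) = i))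
  rw [shiftMap_pow, h, Finsupp.lmapDomain_id]
  rfl

theorem trace_shiftMap_pow (k m j : ℕ) (hm : m ≠ 0) :
    LinearMap.trace ℚ _ (shiftMap k m ^ j) = (k : ℚ) ^ m.gcd j := by
  rw [shiftMap_pow, trace_lmapDomain, card_fixed_cyclicShift_iterate k m j hm, Nat.cast_pow]

theorem sum_range_gcd (f : ℕ → ℚ) {m : ℕ} (hm : m ≠ 0) :
    ∑ j ∈ Finset.range m, f (m.gcd j) =
      ∑ e ∈ m.divisors, (Nat.totient (m / e) : ℚ) * f e := by
  rw [← Finset.sum_fiberwise_of_maps_to (g := m.gcd) (t := m.divisors)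
    fun j _ => Nat.mem_divisors.mpr ⟨Nat.gcd_dvd_left m j, hm⟩]
  refine Finset.sum_congr rfl fun e he => ?_
  rw [Nat.totient_div_of_dvd (Nat.dvd_of_mem_divisors he), ← nsmul_eq_mul,
    ← Finset.sum_const]
  exact Finset.sum_congr rfl fun j hj => by rw [(Finset.mem_filter.mp hj).2]

theorem sum_divisors_sum_moebius (f : ℕ → ℚ) {n : ℕ} (hn : 0 < n) :
    ∑ d ∈ n.divisors, ∑ e ∈ d.divisors, (ArithmeticFunction.moebius (d / e) : ℚ) * f e =
      f n := by
  refine ArithmeticFunction.sum_eq_iff_sum_mul_moebius_eq.mpr (fun d _ => ?_) n hn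
  exact Nat.sum_divisorsAntidiagonal' (n := d)
    fun a b => (ArithmeticFunction.moebius a : ℚ) * f b

theorem sum_range_filter_dvd_neg_one_pow {m d : ℕ} (hm : m ≠ 0) (hme : Even m) (hd : d ∣ m) :
    ∑ j ∈ Finset.range m with d ∣ j, (-1 : ℚ) ^ j =
      if Even d then (m : ℚ) * (1 / (d : ℚ)) else 0 := by
  obtain ⟨n, rfl⟩ := hd
  obtain ⟨hd0, hn0⟩ := Nat.mul_ne_zero_iff.mp hm
  have himage : {j ∈ Finset.range (d * n) | d ∣ j} = (Finset.range n).image (d * ·) := by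
    ext j
    simp only [Finset.mem_filter, Finset.mem_range, Finset.mem_image]
    constructor
    · rintro ⟨hj, i, rfl⟩
      exact ⟨i, lt_of_mul_lt_mul_left hj (Nat.zero_le d), rfl⟩
    · rintro ⟨i, hi, rfl⟩
      exact ⟨Nat.mul_lt_mul_of_pos_left hi (Nat.pos_of_ne_zero hd0), dvd_mul_right d i⟩
  rw [himage, Finset.sum_image fun a _ b _ h => Nat.eq_of_mul_eq_mul_left
    (Nat.pos_of_ne_zero hd0) h]
  simp only [pow_mul]
  split_ifs with h
  · have hd' : (d : ℚ) ≠ 0 := Nat.cast_ne_zero.mpr hd0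
    simp only [h.neg_one_pow, one_pow, Finset.sum_const, Finset.card_range, nsmul_eq_mul]
    push_cast
    field_simp
  · have hn : Even n := (Nat.even_mul.mp hme).resolve_left h
    rw [(Nat.not_even_iff_odd.mp h).neg_one_pow, neg_one_geom_sum, if_pos hn]

theorem sum_range_neg_one_pow_mul_gcd (f : ℕ → ℚ) {m : ℕ} (hm : m ≠ 0) (hme : Even m) :
    ∑ j ∈ Finset.range m, (-1 : ℚ) ^ j * f (m.gcd j) =
      (m : ℚ) * ∑ d ∈ m.divisors with Even d, (1 / (d : ℚ)) *
        ∑ e ∈ d.divisors, (ArithmeticFunction.moebius (d / e) : ℚ) * f e := by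
  set F : ℕ → ℚ := fun d =>
    ∑ e ∈ d.divisors, (ArithmeticFunction.moebius (d / e) : ℚ) * f e with hF
  have hgcd : ∀ j, f (m.gcd j) = ∑ d ∈ m.divisors, if d ∣ j then F d else 0 := fun j => by
    rw [← sum_divisors_sum_moebius f (Nat.gcd_pos_of_pos_left j (Nat.pos_of_ne_zero hm)),
      ← Finset.sum_filter]
    refine Finset.sum_congr ?_ fun _ _ => rfl
    ext d
    simp only [Nat.mem_divisors, Finset.mem_filter, Nat.dvd_gcd_iff]
    have := Nat.gcd_ne_zero_left (n := j) hm
    tauto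
  simp only [hgcd, Finset.mul_sum]
  rw [Finset.sum_comm, Finset.sum_filter]
  refine Finset.sum_congr rfl fun d hd => ?_
  have h := sum_range_filter_dvd_neg_one_pow hm hme (Nat.dvd_of_mem_divisors hd)
  rw [Finset.sum_filter] at h
  calc ∑ j ∈ Finset.range m, (-1 : ℚ) ^ j * (if d ∣ j then F d else 0)
      = (∑ j ∈ Finset.range m, if d ∣ j then (-1 : ℚ) ^ j else 0) * F d := by
        rw [Finset.sum_mul]
        exact Finset.sum_congr rfl fun j _ => by split_ifs <;> simp
    _ = _ := by
        rw [h]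
        split_ifs
        · simp only [hF, Finset.mul_sum, mul_assoc]
        · rw [zero_mul]

/-- Combinatorial content of Propositions 1.10 and 5.14: the `ℚ`-dimension of
`ker(id − τ_m)` equals `(1/m) ∑_{e ∣ m} φ(m/e) k^e` when `m` is odd, and
`∑_{d ∣ m, d even} (1/d) ∑_{e ∣ d} μ(d/e) k^e` when `m` is even. -/
theorem finrank_ker_id_sub_tauSigned (k m : ℕ) (hk : 1 ≤ k) (hm : 1 ≤ m) :
    (Odd m →
      (Module.finrank ℚ (LinearMap.ker (LinearMap.id - tauSigned k m)) : ℚ) =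
        (1 / (m : ℚ)) * ∑ e ∈ m.divisors, (Nat.totient (m / e) : ℚ) * (k : ℚ) ^ e) ∧
    (Even m →
      (Module.finrank ℚ (LinearMap.ker (LinearMap.id - tauSigned k m)) : ℚ) =
        ∑ d ∈ m.divisors.filter (fun d => Even d), (1 / (d : ℚ)) *
          ∑ e ∈ d.divisors, (ArithmeticFunction.moebius (d / e) : ℚ) * (k : ℚ) ^ e) := by
  have hm0 : m ≠ 0 := Nat.one_le_iff_ne_zero.mp hm
  refine ⟨fun hodd => ?_, fun heven => ?_⟩
  · rw [tauSigned, if_pos hodd,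
      finrank_ker_id_sub_eq_sum_trace _ hm0 (shiftMap_pow_self k m hm0)]
    simp only [trace_shiftMap_pow k m _ hm0]
    rw [sum_range_gcd (fun e => (k : ℚ) ^ e) hm0]
  · have hpow : (-(shiftMap k m)) ^ m = 1 := by
      exact (heven.neg_pow (shiftMap k m)).trans (shiftMap_pow_self k m hm0)
    have htrace : ∀ j : ℕ, LinearMap.trace ℚ _ ((-(shiftMap k m)) ^ j) =
        (-1 : ℚ) ^ j * (k : ℚ) ^ m.gcd j := fun j => by
      rw [← trace_shiftMap_pow k m j hm0]
      rcases Nat.even_or_odd j with h | h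
      · rw [h.neg_one_pow, one_mul]
        exact congrArg _ (h.neg_pow (shiftMap k m))
      · rw [h.neg_one_pow, neg_one_mul, ← map_neg]
        exact congrArg _ (h.neg_pow (shiftMap k m))
    rw [tauSigned, if_neg (Nat.not_odd_iff_even.mpr heven),
      finrank_ker_id_sub_eq_sum_trace _ hm0 hpow]
    simp only [htrace]
    rw [sum_range_neg_one_pow_mul_gcd (fun e => (k : ℚ) ^ e) hm0 heven, ← mul_assoc,
      one_div_mul_cancel (Nat.cast_ne_zero.mpr hm0), one_mul]
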